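/- Assume M is a C*-algebra and A is a σ-unital C*-algebra which is an essential ideal of M. Let F_n (n ∈ ℕ) be an increasing sequence of finite subsets of the closed unit ball of M, and let ε_n (n ∈ ℕ) be a decreasing sequence of positive numbers converging to 0. Then A has an increasing approximate unit (e_n) of positive contractions such that, setting e_{−1} = 0 and f_n = (e_{n+1} − e_n)^{1/2}, for all n and all a ∈ F_n: (1) ‖[a, f_n]‖ ≤ ε_n; (2) ‖f_n a f_n‖ ≥ ‖π(a)‖ − ε_n, where π : M → M/A is the quotient map; (3) f_m f_n = 0 whenever |m − n| ≥ 2; (4) ‖[f_n, f_{n+1}]‖ ≤ ε_n. -/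

import Mathlib

/-!
Everything is built inside the commutative algebra generated by one positive element `h`.

Let `(E n)` be the given approximate unit and `h = ∑ 2⁻ⁿ E n`. Ramp functions of `h` give an
approximate unit `(u n)` with `u n * u m = u m` for `m < n` (`exists_nestedUnit`); it is an
approximate unit because `E n ≤ 2ⁿ h` and `h` is almost fixed by `u n`.

The `e n` are averages of long blocks of a sparse subsequence of `(u n)`. They inherit
`e n * e m = e m` for `m < n`, so they commute, they increase, and `(e (m + 1) - e m)` is orthogonal
to `(e (n + 1) - e n)` when `|m - n| ≥ 2`. Passing to square roots, distant `f n` are orthogonal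
and all `f n` commute, so the commutators `[f n, f (n + 1)]` even vanish.

Long averages almost commute with any given `a ∈ M`. Indeed, when the subsequence `(v j)` is
sparse enough, `v j a ≈ v j a v l` for `j < l`, which makes the commutators `[v j, a]`
almost orthogonal for indices at distance at least `2`. Hence by the C*-identity the sum of `K` of
them has norm `O(√K)`, and their average is small (`norm_sum_commutator`). Polynomial approximation
of the square root transfers this to `f n` (`commutator_sqrt`).

For the lower bound on `‖f n * a * f n‖`, let `p = u N` be a unit for `e n`. Then
`b = (1 - p) a (1 - p)` differs from `a` by an element of `A`, so `‖b‖ ≥ dist(a, A)`. As `A` is essential, `‖u k * b * u k‖` is eventually close to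
`‖b‖` (`eventually_norm_compress`). If `e (n + 1)` is a unit for `u k`, then `f n` acts as a unit on
`w = u k - p`, so that `u k * b * u k = w * a * w = w * (f n * a * f n) * w`.
-/

open Filter Topology

/-! ### Commutators with square roots -/

section Sqrt

variable {M : Type*} [NonUnitalCStarAlgebra M] [PartialOrder M] [StarOrderedRing M]

lemma quasispectrum_mem_Icc {x : M} (hx : 0 ≤ x) (hx1 : ‖x‖ ≤ 1) {t : ℝ}
    (ht : t ∈ quasispectrum ℝ x) : t ∈ Set.Icc (0 : ℝ) 1 := by
  refine ⟨quasispectrum_nonneg_of_nonneg x hx t ht, ?_⟩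
  have := NonUnitalIsometricContinuousFunctionalCalculus.norm_quasispectrum_le x ht
    (IsSelfAdjoint.of_nonneg hx)
  exact (le_abs_self t).trans (this.trans hx1)

/-- Positive powers satisfy a Lipschitz estimate for commutators, uniformly over positive
contractions `x` and contractions `a`. -/
lemma commutator_pow (n : ℕ) : ∀ a x : M, ‖a‖ ≤ 1 → 0 ≤ x → ‖x‖ ≤ 1 →
    ‖a * cfcₙ (fun t : ℝ => t ^ (n + 1)) x - cfcₙ (fun t : ℝ => t ^ (n + 1)) x * a‖
      ≤ (n + 1) * ‖a * x - x * a‖ := by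
  induction n with
  | zero =>
    intro a x ha hx hx1
    have : cfcₙ (fun t : ℝ => t ^ (0 + 1)) x = x := by
      simp only [zero_add, pow_one]
      exact cfcₙ_id' ℝ x
    rw [this]; simp
  | succ n ih =>
    intro a x ha hx hx1
    set y := cfcₙ (fun t : ℝ => t ^ (n + 1)) x with hy
    have h : cfcₙ (fun t : ℝ => t ^ (n + 1 + 1)) x = y * x := by
      have := cfcₙ_mul (fun t : ℝ => t ^ (n + 1)) (fun t : ℝ => t) x
      rw [cfcₙ_id' ℝ x] at this
      rw [hy, ← this]
      simp only [pow_succ]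
    have hy1 : ‖y‖ ≤ 1 := by
      refine norm_cfcₙ_le fun t ht => ?_
      have := quasispectrum_mem_Icc hx hx1 ht
      rw [Real.norm_of_nonneg (pow_nonneg this.1 _)]
      exact pow_le_one₀ this.1 this.2
    rw [h]
    have e : a * (y * x) - y * x * a = (a * y - y * a) * x + y * (a * x - x * a) := by
      noncomm_ring
    rw [e]
    have h1 := ih a x ha hx hx1
    calc _ ≤ ‖a * y - y * a‖ * ‖x‖ + ‖y‖ * ‖a * x - x * a‖ :=
          (norm_add_le _ _).trans (add_le_add (norm_mul_le _ _) (norm_mul_le _ _))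
      _ ≤ ‖a * y - y * a‖ * 1 + 1 * ‖a * x - x * a‖ := by gcongr
      _ ≤ _ := by push_cast; linarith

lemma commutator_poly (M : Type*) [NonUnitalCStarAlgebra M] [PartialOrder M] [StarOrderedRing M]
    (p : Polynomial ℝ) : ∃ C : ℝ, 0 ≤ C ∧ ∀ a x : M, ‖a‖ ≤ 1 → 0 ≤ x → ‖x‖ ≤ 1 →
    ‖a * cfcₙ (fun t : ℝ => p.eval t - p.eval 0) x
      - cfcₙ (fun t : ℝ => p.eval t - p.eval 0) x * a‖ ≤ C * ‖a * x - x * a‖ := by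
  induction p using Polynomial.induction_on' with
  | add p q hp hq =>
    obtain ⟨C, hC, h1⟩ := hp
    obtain ⟨D, hD, h2⟩ := hq
    refine ⟨C + D, by positivity, fun a x ha hx hx1 => ?_⟩
    have e : cfcₙ (fun t : ℝ => (p + q).eval t - (p + q).eval 0) x =
        cfcₙ (fun t : ℝ => p.eval t - p.eval 0) x + cfcₙ (fun t : ℝ => q.eval t - q.eval 0) x := by
      rw [← cfcₙ_add (fun t : ℝ => p.eval t - p.eval 0) (fun t : ℝ => q.eval t - q.eval 0) x
        (by fun_prop) (by simp) (by fun_prop) (by simp)]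
      congr 1; ext t; simp only [Polynomial.eval_add]; ring
    rw [e]
    set y := cfcₙ (fun t : ℝ => p.eval t - p.eval 0) x
    set z := cfcₙ (fun t : ℝ => q.eval t - q.eval 0) x
    have e2 : a * (y + z) - (y + z) * a = (a * y - y * a) + (a * z - z * a) := by noncomm_ring
    rw [e2, add_mul]
    exact (norm_add_le _ _).trans (add_le_add (h1 a x ha hx hx1) (h2 a x ha hx hx1))
  | monomial n c =>
    cases n with
    | zero =>
      refine ⟨0, le_rfl, fun a x ha hx hx1 => ?_⟩
      have : (fun t : ℝ => (Polynomial.monomial 0 c).eval t - (Polynomial.monomial 0 c).eval 0)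
        = fun _ => 0 := by ext t; simp
      rw [this]; simp [cfcₙ_const_zero]
    | succ n =>
      refine ⟨|c| * (n + 1), by positivity, fun a x ha hx hx1 => ?_⟩
      have : (fun t : ℝ => (Polynomial.monomial (n + 1) c).eval t
          - (Polynomial.monomial (n + 1) c).eval 0) = fun t => c * t ^ (n + 1) := by
        ext t; simp [Polynomial.eval_monomial]
      rw [this, cfcₙ_const_mul c (fun t : ℝ => t ^ (n + 1)) x, mul_smul_comm, smul_mul_assoc,
        ← smul_sub, norm_smul, mul_assoc, Real.norm_eq_abs]
      gcongr
      exact commutator_pow n a x ha hx hx1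

/-- If a contraction almost commutes with a positive contraction, then it almost commutes with
its square root, uniformly. -/
lemma commutator_sqrt (M : Type*) [NonUnitalCStarAlgebra M] [PartialOrder M] [StarOrderedRing M]
    (ε : ℝ) (hε : 0 < ε) : ∃ δ : ℝ, 0 < δ ∧ ∀ a x : M, ‖a‖ ≤ 1 → 0 ≤ x → ‖x‖ ≤ 1 →
    ‖a * x - x * a‖ ≤ δ → ‖a * CFC.sqrt x - CFC.sqrt x * a‖ ≤ ε := by
  obtain ⟨p, hp⟩ := exists_polynomial_near_of_continuousOn 0 1 Real.sqrt
    Real.continuous_sqrt.continuousOn (ε / 8) (by positivity)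
  obtain ⟨C, hC, h⟩ := commutator_poly M p
  refine ⟨ε / (2 * (C + 1)), by positivity, fun a x ha hx hx1 hax => ?_⟩
  rw [CFC.sqrt_eq_real_sqrt x hx]
  set y := cfcₙ (fun t : ℝ => p.eval t - p.eval 0) x with hy
  set z := cfcₙ Real.sqrt x with hz
  have hyz : ‖z - y‖ ≤ ε / 4 := by
    rw [hz, hy, ← cfcₙ_sub Real.sqrt (fun t : ℝ => p.eval t - p.eval 0) x
      (Real.continuous_sqrt.continuousOn) (by simp) (by fun_prop) (by simp)]
    refine norm_cfcₙ_le fun t ht => ?_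
    have h1 := abs_lt.1 (hp t (quasispectrum_mem_Icc hx hx1 ht))
    have h2 := abs_lt.1 (hp 0 (by simp))
    rw [Real.sqrt_zero] at h2
    rw [Real.norm_eq_abs, abs_le]
    constructor <;> linarith [h1.1, h1.2, h2.1, h2.2]
  have h1 := h a x ha hx hx1
  have h2 : C * ‖a * x - x * a‖ ≤ ε / 2 := by
    calc C * ‖a * x - x * a‖ ≤ (C + 1) * (ε / (2 * (C + 1))) := by
          gcongr; linarith
      _ = ε / 2 := by field_simp
  have e : a * z - z * a = (a * y - y * a) + (a * (z - y) - (z - y) * a) := by noncomm_ring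
  rw [e]
  have h3 : ‖a * (z - y)‖ ≤ ε / 4 := (norm_mul_le _ _).trans
    (by nlinarith [norm_nonneg a, norm_nonneg (z - y)])
  have h4 : ‖(z - y) * a‖ ≤ ε / 4 := (norm_mul_le _ _).trans
    (by nlinarith [norm_nonneg a, norm_nonneg (z - y)])
  calc _ ≤ ‖a * y - y * a‖ + (‖a * (z - y)‖ + ‖(z - y) * a‖) :=
        (norm_add_le _ _).trans (add_le_add le_rfl (norm_sub_le _ _))
    _ ≤ ε := by linarith

lemma sqrt_mul_sqrt_eq_zero {x y : M} (hx : 0 ≤ x) (hy : 0 ≤ y) (hxy : x * y = 0) :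
    CFC.sqrt x * CFC.sqrt y = 0 := by
  have hsx : star (CFC.sqrt x) = CFC.sqrt x := (IsSelfAdjoint.of_nonneg (CFC.sqrt_nonneg x))
  have hsy : star (CFC.sqrt y) = CFC.sqrt y := (IsSelfAdjoint.of_nonneg (CFC.sqrt_nonneg y))
  have hy' : star y = y := IsSelfAdjoint.of_nonneg hy
  have h1 : CFC.sqrt x * y = 0 := by
    rw [← CStarRing.star_mul_self_eq_zero_iff, star_mul, hsx, hy', mul_assoc,
      ← mul_assoc (CFC.sqrt x), CFC.sqrt_mul_sqrt_self x hx, hxy, mul_zero]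
  rw [← CStarRing.mul_star_self_eq_zero_iff, star_mul, hsx, hsy, mul_assoc,
    ← mul_assoc (CFC.sqrt y), CFC.sqrt_mul_sqrt_self y hy, ← mul_assoc, h1, zero_mul]

lemma sqrt_commute {x y : M} (h : Commute x y) : Commute (CFC.sqrt x) (CFC.sqrt y) :=
  ((h.cfcₙ_nnreal _).symm.cfcₙ_nnreal _).symm

/-- If `f ≥ 0` and `f²` fixes `w`, then `f` fixes `w`. -/
lemma mul_eq_self_of_sq {f w : M} (hf : 0 ≤ f) (h : f * f * w = w) : f * w = w := by
  have h1 : f * (f * w - w) = -(f * w - w) := by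
    rw [mul_sub, ← mul_assoc, h]; abel
  have h2 : 0 ≤ star (f * w - w) * f * (f * w - w) := star_left_conjugate_nonneg hf _
  rw [mul_assoc, h1, mul_neg] at h2
  have h3 : star (f * w - w) * (f * w - w) = 0 :=
    le_antisymm (neg_nonneg.1 h2) (star_mul_self_nonneg _)
  exact sub_eq_zero.1 ((CStarRing.star_mul_self_eq_zero_iff _).1 h3)

/-- If a positive contraction `e'` is a unit for a positive contraction `e`, then `e ≤ e'`. -/
lemma le_of_mul_eq {e e' : M} (he : 0 ≤ e) (he1 : ‖e‖ ≤ 1) (he' : 0 ≤ e') (he1' : ‖e'‖ ≤ 1)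
    (h : e' * e = e) : e ≤ e' := by
  have hs : star e = e := IsSelfAdjoint.of_nonneg he
  have hs' : star e' = e' := IsSelfAdjoint.of_nonneg he'
  have h' : e * e' = e := by
    have := congrArg star h
    rwa [star_mul, hs, hs'] at this
  have key : ∀ x c : M, 0 ≤ x → ‖x‖ ≤ 1 → star c * x * c ≤ star c * c := fun x c hx hx1 => by
    refine (CStarAlgebra.star_left_conjugate_le_norm_smul (IsSelfAdjoint.of_nonneg hx)).trans ?_
    have h1 : 0 ≤ (1 - ‖x‖) • (star c * c) :=
      smul_nonneg (sub_nonneg.2 hx1) (star_mul_self_nonneg c)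
    rw [sub_smul, one_smul] at h1
    exact sub_nonneg.1 h1
  have h1 := key e e' he he1
  rw [hs', h, h'] at h1
  have h2 := key e' (CFC.sqrt e') he' he1'
  have hq : star (CFC.sqrt e') = CFC.sqrt e' := IsSelfAdjoint.of_nonneg (CFC.sqrt_nonneg e')
  have h3 : CFC.sqrt e' * e' * CFC.sqrt e' = e' * e' := by
    have := CFC.sqrt_mul_sqrt_self e' he'
    set s := CFC.sqrt e'
    calc s * e' * s = s * (s * s) * s := by rw [this]
      _ = (s * s) * (s * s) := by noncomm_ring
      _ = _ := by rw [this]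
  rw [hq, h3, CFC.sqrt_mul_sqrt_self e' he'] at h2
  exact h1.trans h2

end Sqrt

/-! ### Nested approximate units -/

/-- An approximate unit `u` of positive contractions in `A` such that each `u n` is a unit for all
the preceding terms. -/
structure NestedUnit {M : Type*} [NonUnitalCStarAlgebra M] [PartialOrder M]
    (A : Set M) (u : ℕ → M) : Prop where
  mem : ∀ n, u n ∈ A
  nonneg : ∀ n, 0 ≤ u n
  norm_le : ∀ n, ‖u n‖ ≤ 1
  mul_lt : ∀ m n, m < n → u n * u m = u m
  tendsto : ∀ a ∈ A, Tendsto (fun n => u n * a) atTop (𝓝 a)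

/-- The ramp function `ℝ → [0, 1]` vanishing on `t ≤ 2 ^ (-(n + 1))` and equal to `1` on
`t ≥ 2 ^ (-n)`. -/
noncomputable def ramp (n : ℕ) (t : ℝ) : ℝ := max 0 (min 1 (2 ^ (n + 1) * t - 1))

lemma ramp_continuous (n : ℕ) : Continuous (ramp n) := by unfold ramp; fun_prop

lemma ramp_zero (n : ℕ) : ramp n 0 = 0 := by simp [ramp]

lemma ramp_nonneg (n : ℕ) (t : ℝ) : 0 ≤ ramp n t := le_max_left _ _

lemma ramp_le_one (n : ℕ) (t : ℝ) : ramp n t ≤ 1 := max_le zero_le_one (min_le_left _ _)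

lemma ramp_eq_zero {n : ℕ} {t : ℝ} (h : 2 ^ (n + 1) * t ≤ 1) : ramp n t = 0 :=
  max_eq_left ((min_le_right _ _).trans (by linarith))

lemma ramp_eq_one {n : ℕ} {t : ℝ} (h : 2 ≤ 2 ^ (n + 1) * t) : ramp n t = 1 := by
  rw [ramp, min_eq_left (by linarith), max_eq_right zero_le_one]

lemma ramp_mul_ramp {m n : ℕ} (hmn : m < n) (t : ℝ) : ramp n t * ramp m t = ramp m t := by
  rcases le_or_gt (2 ^ (m + 1) * t) 1 with h | h
  · rw [ramp_eq_zero h, mul_zero]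
  · have ht : 0 < t := by
      by_contra! ht
      have : (2 : ℝ) ^ (m + 1) * t ≤ 0 := mul_nonpos_of_nonneg_of_nonpos (by positivity) ht
      linarith
    have h2 : (2 : ℝ) ^ (m + 2) ≤ 2 ^ (n + 1) := pow_le_pow_right₀ (by norm_num) (by omega)
    rw [ramp_eq_one, one_mul]
    calc (2 : ℝ) ≤ 2 * (2 ^ (m + 1) * t) := by linarith
      _ = 2 ^ (m + 2) * t := by ring
      _ ≤ _ := by gcongr

section Nested

variable {M : Type*} [NonUnitalCStarAlgebra M] [PartialOrder M] [StarOrderedRing M]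

lemma ramp_mem {A : Set M} (hideal : ∀ x : M, ∀ a ∈ A, x * a ∈ A ∧ a * x ∈ A)
    {h : M} (hA : h ∈ A) (h0 : 0 ≤ h) (n : ℕ) : cfcₙ (ramp n) h ∈ A := by
  -- `ramp n` vanishes near `0`, so it is divisible by the identity function.
  let k : ℝ → ℝ := fun t => ramp n t / max t (1 / 2 ^ (n + 1))
  have hpos : ∀ t : ℝ, 0 < max t (1 / 2 ^ (n + 1)) := fun t =>
    lt_of_lt_of_le (by positivity) (le_max_right _ _)
  have hk : Continuous k :=
    (ramp_continuous n).div (by fun_prop) fun t => (hpos t).ne'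
  have hk0 : k 0 = 0 := by simp [k, ramp_zero]
  have e : ramp n = fun t => t * k t := by
    ext t
    rcases le_or_gt (2 ^ (n + 1) * t) 1 with ht | ht
    · simp [k, ramp_eq_zero ht]
    · have : 1 / 2 ^ (n + 1) ≤ t := by
        rw [div_le_iff₀ (by positivity)]; linarith
      have h2 : 0 < t := lt_of_lt_of_le (by positivity) this
      simp only [k, max_eq_left this]
      field_simp
  rw [e, cfcₙ_mul (fun t : ℝ => t) k h (by fun_prop) (by simp) hk.continuousOn hk0, cfcₙ_id' ℝ h (IsSelfAdjoint.of_nonneg h0)]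
  exact (hideal _ h hA).2

/-- An element dominating multiples of an approximate unit gives a nested approximate unit by
functional calculus. -/
lemma nestedUnit_of_dominating {A : Set M}
    (hideal : ∀ x : M, ∀ a ∈ A, x * a ∈ A ∧ a * x ∈ A) {E : ℕ → M}
    (hE : ∀ n, E n ∈ A ∧ 0 ≤ E n ∧ ‖E n‖ ≤ 1)
    (hlim : ∀ a ∈ A, Tendsto (fun n => ‖E n * a - a‖) atTop (𝓝 0))
    {h : M} (hA : h ∈ A) (h0 : 0 ≤ h) (hdom : ∀ n, ∃ c : ℝ, 0 ≤ c ∧ E n ≤ c • h) :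
    NestedUnit A (fun n => cfcₙ (ramp n) h) := by
  have hun : ∀ n, 0 ≤ cfcₙ (ramp n) h := fun n => cfcₙ_nonneg fun t _ => ramp_nonneg n t
  have hu1 : ∀ n, ‖cfcₙ (ramp n) h‖ ≤ 1 := fun n => norm_cfcₙ_le fun t _ => by
    rw [Real.norm_of_nonneg (ramp_nonneg n t)]; exact ramp_le_one n t
  refine ⟨ramp_mem hideal hA h0, hun, hu1, fun m n hmn => ?_, fun y hy => ?_⟩
  · rw [← cfcₙ_mul (ramp n) (ramp m) h (ramp_continuous n).continuousOn (ramp_zero n)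
      (ramp_continuous m).continuousOn (ramp_zero m)]
    congr 1
    ext t
    exact ramp_mul_ramp hmn t
  have hh : ∀ n, ‖h - cfcₙ (ramp n) h * h‖ ≤ (1 / 2) ^ n := fun n => by
    have e : h - cfcₙ (ramp n) h * h = cfcₙ (fun t : ℝ => t - ramp n t * t) h := by
      rw [cfcₙ_sub (fun t : ℝ => t) (fun t => ramp n t * t) h (by fun_prop) (by simp)
          ((ramp_continuous n).mul continuous_id).continuousOn (by simp),
        cfcₙ_mul (ramp n) (fun t : ℝ => t) h (ramp_continuous n).continuousOn (ramp_zero n)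
          (by fun_prop) (by simp), cfcₙ_id' ℝ h (IsSelfAdjoint.of_nonneg h0)]
    rw [e]
    refine norm_cfcₙ_le fun t ht => ?_
    have ht0 := quasispectrum_nonneg_of_nonneg h h0 t ht
    rcases le_or_gt 2 (2 ^ (n + 1) * t) with h2 | h2
    · rw [ramp_eq_one h2]; simp
    · have h3 : t ≤ (1 / 2) ^ n := by
        rw [one_div, inv_pow, ← one_div, le_div_iff₀ (by positivity)]
        rw [pow_succ] at h2
        linarith
      have h4 := ramp_nonneg n t
      have h5 := ramp_le_one n t
      rw [Real.norm_eq_abs, abs_of_nonneg (by nlinarith)]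
      nlinarith
  have hEm : ∀ m, Tendsto (fun n => ‖E m - cfcₙ (ramp n) h * E m‖) atTop (𝓝 0) := fun m => by
    obtain ⟨c, hc, hcm⟩ := hdom m
    have hsq : ∀ n, ‖E m - cfcₙ (ramp n) h * E m‖ ≤ Real.sqrt (c * (2 * (1 / 2) ^ n)) := by
      intro n
      refine Real.le_sqrt_of_sq_le ?_
      set u := cfcₙ (ramp n) h with hu
      have hus : star u = u := IsSelfAdjoint.of_nonneg (hun n)
      set s := CFC.sqrt (E m) with hs
      have hss : star s = s := IsSelfAdjoint.of_nonneg (CFC.sqrt_nonneg _)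
      have hsE : s * s = E m := CFC.sqrt_mul_sqrt_self (E m) (hE m).2.1
      have hs1 : ‖s‖ ≤ 1 := by
        have : ‖s‖ * ‖s‖ ≤ 1 := by
          rw [← CStarRing.norm_star_mul_self, hss, hsE]; exact (hE m).2.2
        nlinarith [norm_nonneg s]
      -- compression by `1 - u` preserves order and multiplies out without a unit
      have hconj : ∀ x : M, 0 ≤ x → 0 ≤ x - u * x - (x - u * x) * u := fun x hx => by
        obtain ⟨b, rfl⟩ := CStarAlgebra.nonneg_iff_eq_star_mul_self.1 hx
        have : star (b - b * u) * (b - b * u) =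
            star b * b - u * (star b * b) - (star b * b - u * (star b * b)) * u := by
          rw [star_sub, star_mul, hus]; noncomm_ring
        rw [← this]; exact star_mul_self_nonneg _
      have h1 : ‖E m - u * E m - (E m - u * E m) * u‖
          ≤ ‖c • h - u * (c • h) - (c • h - u * (c • h)) * u‖ := by
        refine CStarAlgebra.norm_le_norm_of_nonneg_of_le (hconj _ (hE m).2.1) ?_
        have := hconj _ (sub_nonneg.2 hcm)
        rw [← sub_nonneg]
        convert this using 1
        noncomm_ring
      have h2 : ‖c • h - u * (c • h) - (c • h - u * (c • h)) * u‖ ≤ c * (2 * (1 / 2) ^ n) := by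
        have e : c • h - u * (c • h) - (c • h - u * (c • h)) * u
            = c • ((h - u * h) - (h - u * h) * u) := by
          simp only [mul_smul_comm, smul_sub, sub_mul, smul_mul_assoc]
        rw [e, norm_smul, Real.norm_of_nonneg hc]
        have h3 : ‖(h - u * h) * u‖ ≤ (1 / 2) ^ n * 1 :=
          (norm_mul_le _ _).trans (mul_le_mul (hh n) (hu1 n) (norm_nonneg _) (by positivity))
        have h4 := norm_sub_le (h - u * h) ((h - u * h) * u)
        have h5 := hh n
        rw [← hu] at h5
        gcongr
        linarith
      have h3 : ‖s - s * u‖ * ‖s - s * u‖ = ‖E m - u * E m - (E m - u * E m) * u‖ := by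
        rw [← CStarRing.norm_star_mul_self, star_sub, star_mul, hus, hss, ← hsE]
        congr 1
        noncomm_ring
      have h4 : E m - u * E m = star (s - s * u) * s := by
        rw [star_sub, star_mul, hus, hss, sub_mul, mul_assoc, hsE]
      have h5 : ‖E m - u * E m‖ ≤ ‖s - s * u‖ := by
        rw [h4]
        refine (norm_mul_le _ _).trans ?_
        rw [norm_star]
        exact mul_le_of_le_one_right (norm_nonneg _) hs1
      calc ‖E m - u * E m‖ ^ 2 ≤ ‖s - s * u‖ ^ 2 := by gcongr
        _ = ‖s - s * u‖ * ‖s - s * u‖ := sq _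
        _ ≤ _ := by rw [h3]; exact h1.trans h2
    refine squeeze_zero (fun n => norm_nonneg _) hsq ?_
    have : Tendsto (fun n : ℕ => Real.sqrt (c * (2 * (1 / 2 : ℝ) ^ n))) atTop
        (𝓝 (Real.sqrt (c * (2 * 0)))) :=
      (Real.continuous_sqrt.tendsto _).comp
        (((tendsto_pow_atTop_nhds_zero_of_lt_one (by norm_num) (by norm_num)).const_mul _).const_mul
          _)
    simpa using this
  rw [tendsto_iff_norm_sub_tendsto_zero, Metric.tendsto_atTop]
  intro ε hε
  obtain ⟨m, hm⟩ := (Metric.tendsto_atTop.1 (hlim y hy)) (ε / 4) (by positivity)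
  have hm := hm m le_rfl
  obtain ⟨N, hN⟩ := (Metric.tendsto_atTop.1 (hEm m)) (ε / (2 * (‖y‖ + 1))) (by positivity)
  refine ⟨N, fun n hn => ?_⟩
  have hn := hN n hn
  simp only [Real.dist_0_eq_abs, abs_norm] at hm hn ⊢
  set u := cfcₙ (ramp n) h with hu
  have e : u * y - y = (E m * y - y) - u * (E m * y - y) - (E m - u * E m) * y := by noncomm_ring
  have h1 : ‖u * (E m * y - y)‖ ≤ ε / 4 := (norm_mul_le _ _).trans
    ((mul_le_of_le_one_left (norm_nonneg _) (hu1 n)).trans hm.le)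
  have h2 : ‖(E m - u * E m) * y‖ < ε / 2 := by
    refine (norm_mul_le _ _).trans_lt ?_
    calc ‖E m - u * E m‖ * ‖y‖ ≤ ‖E m - u * E m‖ * (‖y‖ + 1) := by gcongr; linarith
      _ < ε / (2 * (‖y‖ + 1)) * (‖y‖ + 1) := by gcongr
      _ = ε / 2 := by field_simp
  rw [e]
  calc _ ≤ ‖E m * y - y‖ + ‖u * (E m * y - y)‖ + ‖(E m - u * E m) * y‖ :=
        (norm_sub_le _ _).trans (add_le_add (norm_sub_le _ _) le_rfl)
    _ < ε := by linarith

lemma exists_nestedUnit (A : Set M) (hclosed : IsClosed A)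
    (hadd : ∀ a ∈ A, ∀ b ∈ A, a + b ∈ A) (hsmul : ∀ (z : ℂ), ∀ a ∈ A, z • a ∈ A)
    (hideal : ∀ x : M, ∀ a ∈ A, x * a ∈ A ∧ a * x ∈ A) {E : ℕ → M}
    (hE : ∀ n, E n ∈ A ∧ 0 ≤ E n ∧ ‖E n‖ ≤ 1)
    (hlim : ∀ a ∈ A, Tendsto (fun n => ‖E n * a - a‖) atTop (𝓝 0)) :
    ∃ u : ℕ → M, NestedUnit A u := by
  have h0A : (0 : M) ∈ A := by simpa using hsmul 0 _ (hE 0).1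
  let g : ℕ → M := fun n => ((1 / 2 : ℝ) ^ n) • E n
  have hgA : ∀ n, g n ∈ A := fun n => by
    have := hsmul (((1 / 2 : ℝ) ^ n : ℝ) : ℂ) _ (hE n).1
    rwa [Complex.coe_smul] at this
  have hg0 : ∀ n, 0 ≤ g n := fun n => smul_nonneg (by positivity) (hE n).2.1
  have hgs : Summable g := by
    refine Summable.of_norm_bounded (summable_geometric_of_lt_one (r := (1 / 2 : ℝ))
      (by norm_num) (by norm_num)) fun n => ?_
    simp only [g]
    rw [norm_smul, Real.norm_of_nonneg (by positivity)]
    exact mul_le_of_le_one_right (by positivity) (hE n).2.2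
  have hsum := hgs.hasSum
  have hfin : ∀ s : Finset ℕ, ∑ i ∈ s, g i ∈ A := fun s => by
    induction s using Finset.induction_on with
    | empty => simpa using h0A
    | insert i s hi ih => rw [Finset.sum_insert hi]; exact hadd _ (hgA i) _ ih
  have hA : ∑' n, g n ∈ A :=
    hclosed.mem_of_tendsto hsum (Eventually.of_forall hfin)
  have hnn : IsClosed {x : M | 0 ≤ x} := CStarAlgebra.isClosed_nonneg
  have hpos : 0 ≤ ∑' n, g n :=
    hnn.mem_of_tendsto hsum (Eventually.of_forall fun s => Finset.sum_nonneg fun i _ => hg0 i)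
  have hle : ∀ n, g n ≤ ∑' n, g n := fun n => by
    rw [← sub_nonneg]
    refine hnn.mem_of_tendsto (hsum.sub_const (g n)) ?_
    filter_upwards [eventually_ge_atTop {n}] with s hs
    exact sub_nonneg.2 (Finset.single_le_sum (fun i _ => hg0 i) (hs (by simp)))
  refine ⟨_, nestedUnit_of_dominating hideal hE hlim hA hpos fun n => ⟨2 ^ n, by positivity, ?_⟩⟩
  have h1 : E n = (2 : ℝ) ^ n • g n := by
    simp only [g, smul_smul]
    rw [← mul_pow]; norm_num
  calc E n = (2 : ℝ) ^ n • g n := h1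
    _ ≤ _ := smul_le_smul_of_nonneg_left (hle n) (by positivity)

end Nested

/-! ### Almost commuting averages -/

section Average

variable {M : Type*} [NonUnitalCStarAlgebra M] [PartialOrder M] [StarOrderedRing M]

lemma exists_sparse {A : Set M} (hideal : ∀ x : M, ∀ a ∈ A, x * a ∈ A ∧ a * x ∈ A)
    {u : ℕ → M} (hu : NestedUnit A u) (F : Finset M) {η : ℝ} (hη : 0 < η) (N : ℕ) :
    ∃ φ : ℕ → ℕ, StrictMono φ ∧ N < φ 0 ∧ ∀ j l, j < l → ∀ a ∈ F,
      ‖u (φ j) * a - u (φ j) * a * u (φ l)‖ ≤ η := by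
  have hstar : ∀ n, star (u n) = u n := fun n => IsSelfAdjoint.of_nonneg (hu.nonneg n)
  have key : ∀ i, ∃ m, i < m ∧ ∀ l, m ≤ l → ∀ a ∈ F, ‖u i * a - u i * a * u l‖ ≤ η := fun i => by
    have : ∀ᶠ l in atTop, ∀ a ∈ F, ‖u i * a - u i * a * u l‖ ≤ η := by
      refine (eventually_all_finset F).2 fun a _ => ?_
      -- `star a * u i` lies in `A`, whereas `A` is not assumed to be self-adjoint
      have h := tendsto_iff_norm_sub_tendsto_zero.1
        (hu.tendsto (star a * u i) (hideal (star a) _ (hu.mem i)).1)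
      filter_upwards [h.eventually_lt_const hη] with l hl
      have e : u i * a - u i * a * u l = - star (u l * (star a * u i) - star a * u i) := by
        simp only [star_sub, star_mul, star_star, hstar]; noncomm_ring
      rw [e, norm_neg, norm_star]
      exact hl.le
    obtain ⟨m, hm⟩ := eventually_atTop.1 this
    exact ⟨max m (i + 1), by omega, fun l hl => hm l (by omega)⟩
  choose m hm1 hm2 using key
  let φ : ℕ → ℕ := fun j => Nat.rec (N + 1) (fun _ x => m x) j
  have hφ : StrictMono φ := strictMono_nat_of_lt_succ fun j => hm1 (φ j)
  refine ⟨φ, hφ, Nat.lt_succ_self N, fun j l hjl a ha => hm2 (φ j) (φ l) ?_ a ha⟩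
  exact hφ.monotone (Nat.succ_le_of_lt hjl)

/-- Commutators `[v j, a]` with a sparse nested sequence are almost orthogonal, so a sum of `K` of
them has norm of order `√K` only. -/
lemma norm_sum_commutator {v : ℕ → M} (hv0 : ∀ n, 0 ≤ v n) (hv1 : ∀ n, ‖v n‖ ≤ 1)
    (hv : ∀ j l, j < l → v l * v j = v j) {a : M} (ha : ‖a‖ ≤ 1) {η : ℝ} (hη : 0 ≤ η)
    (h : ∀ j l, j < l → ‖v j * a - v j * a * v l‖ ≤ η)
    (h' : ∀ j l, j < l → ‖v j * star a - v j * star a * v l‖ ≤ η) (K : ℕ) :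
    ‖∑ j ∈ Finset.range K, (v j * a - a * v j)‖ ^ 2 ≤ 4 * η * K ^ 2 + 12 * K := by
  have hstar : ∀ n, star (v n) = v n := fun n => IsSelfAdjoint.of_nonneg (hv0 n)
  have hv' : ∀ j l, j < l → v j * v l = v j := fun j l hjl => by
    have := congrArg star (hv j l hjl)
    rwa [star_mul, hstar, hstar] at this
  set x : ℕ → M := fun j => v j * a - a * v j with hx
  have hxn : ∀ j, ‖x j‖ ≤ 2 := fun j => by
    refine (norm_sub_le _ _).trans ?_
    have h1 : ‖v j * a‖ ≤ 1 := (norm_mul_le _ _).trans (mul_le_one₀ (hv1 j) (norm_nonneg _) ha)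
    have h2 : ‖a * v j‖ ≤ 1 := (norm_mul_le _ _).trans (mul_le_one₀ ha (norm_nonneg _) (hv1 j))
    linarith
  have hvx : ∀ i j, i < j → ‖v i * x j‖ ≤ η := fun i j hij => by
    have : v i * x j = v i * a - v i * a * v j := by
      rw [hx]; simp only [mul_sub, ← mul_assoc, hv' i j hij]
    rw [this]; exact h i j hij
  have hlt : ∀ i j, i + 2 ≤ j → ‖star (x i) * x j‖ ≤ 4 * η := fun i j hij => by
    have e : star (x i) * x j = star a * (v i * x j)
        - (v i * star a - v i * star a * v (i + 1)) * x j
        - v i * (star a * (v (i + 1) * x j)) := by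
      have : star (x i) = star a * v i - v i * star a := by
        simp only [hx, star_sub, star_mul, hstar]
      rw [this]; noncomm_ring
    have hsa : ‖star a‖ ≤ 1 := by rwa [norm_star]
    have h1 : ‖star a * (v i * x j)‖ ≤ η := (norm_mul_le _ _).trans
      ((mul_le_of_le_one_left (norm_nonneg _) hsa).trans (hvx i j (by omega)))
    have h2 : ‖(v i * star a - v i * star a * v (i + 1)) * x j‖ ≤ η * 2 := (norm_mul_le _ _).trans
      (mul_le_mul (h' i (i + 1) (by omega)) (hxn j) (norm_nonneg _) hη)
    have h3 : ‖star a * (v (i + 1) * x j)‖ ≤ η := (norm_mul_le _ _).trans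
      ((mul_le_of_le_one_left (norm_nonneg _) hsa).trans (hvx (i + 1) j (by omega)))
    have h4 : ‖v i * (star a * (v (i + 1) * x j))‖ ≤ η := (norm_mul_le _ _).trans
      ((mul_le_of_le_one_left (norm_nonneg _) (hv1 i)).trans h3)
    rw [e]
    calc _ ≤ ‖star a * (v i * x j)‖ + ‖(v i * star a - v i * star a * v (i + 1)) * x j‖
          + ‖v i * (star a * (v (i + 1) * x j))‖ :=
          (norm_sub_le _ _).trans (add_le_add (norm_sub_le _ _) le_rfl)
      _ ≤ 4 * η := by linarith
  have hij : ∀ i j, ‖star (x i) * x j‖ ≤ 4 * η + if j ∈ ({i - 1, i, i + 1} : Finset ℕ)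
      then 4 else 0 := fun i j => by
    split_ifs with hj
    · have : ‖star (x i) * x j‖ ≤ 2 * 2 := (norm_mul_le _ _).trans
        (mul_le_mul (by rw [norm_star]; exact hxn i) (hxn j) (norm_nonneg _) (by norm_num))
      linarith
    · simp only [Finset.mem_insert, Finset.mem_singleton, not_or] at hj
      rw [add_zero]
      rcases le_or_gt (i + 2) j with h1 | h1
      · exact hlt i j h1
      · rw [← norm_star, star_mul, star_star]
        exact hlt j i (by omega)
  rw [sq, ← CStarRing.norm_star_mul_self, star_sum, Finset.sum_mul_sum]
  have hcard : ∀ i, ∑ j ∈ Finset.range K, (if j ∈ ({i - 1, i, i + 1} : Finset ℕ) then (4 : ℝ) else 0)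
      ≤ 12 := fun i => by
    rw [← Finset.sum_filter, Finset.sum_const, nsmul_eq_mul]
    have : (Finset.filter (fun j => j ∈ ({i - 1, i, i + 1} : Finset ℕ)) (Finset.range K)).card
        ≤ 3 := (Finset.card_le_card (fun j hj => (Finset.mem_filter.1 hj).2)).trans
          Finset.card_le_three
    have : ((Finset.filter (fun j => j ∈ ({i - 1, i, i + 1} : Finset ℕ))
      (Finset.range K)).card : ℝ) ≤ 3 := by exact_mod_cast this
    linarith
  calc _ ≤ ∑ i ∈ Finset.range K, ∑ j ∈ Finset.range K, ‖star (x i) * x j‖ :=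
        (norm_sum_le _ _).trans (Finset.sum_le_sum fun i _ => norm_sum_le _ _)
    _ ≤ ∑ i ∈ Finset.range K, ∑ j ∈ Finset.range K, (4 * η + if j ∈ ({i - 1, i, i + 1} : Finset ℕ)
      then 4 else 0) := Finset.sum_le_sum fun i _ => Finset.sum_le_sum fun j _ => hij i j
    _ ≤ ∑ i ∈ Finset.range K, (4 * η * K + 12) := by
        refine Finset.sum_le_sum fun i _ => ?_
        rw [Finset.sum_add_distrib, Finset.sum_const, Finset.card_range, nsmul_eq_mul]
        have := hcard i
        linarith
    _ = _ := by rw [Finset.sum_const, Finset.card_range, nsmul_eq_mul]; ring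

/-- Averages of a nested approximate unit provide elements that are units for `u N`, have some
`u N'` as a unit, and almost commute with a prescribed finite set. -/
lemma exists_quasicentral {A : Set M} (hadd : ∀ a ∈ A, ∀ b ∈ A, a + b ∈ A)
    (hsmul : ∀ (z : ℂ), ∀ a ∈ A, z • a ∈ A)
    (hideal : ∀ x : M, ∀ a ∈ A, x * a ∈ A ∧ a * x ∈ A)
    {u : ℕ → M} (hu : NestedUnit A u) (F : Finset M) (hF : ∀ a ∈ F, ‖a‖ ≤ 1)
    {δ : ℝ} (hδ : 0 < δ) (N : ℕ) :
    ∃ (e : M) (N' : ℕ), N < N' ∧ e ∈ A ∧ 0 ≤ e ∧ ‖e‖ ≤ 1 ∧ e * u N = u N ∧ u N' * e = e ∧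
      ∀ a ∈ F, ‖a * e - e * a‖ ≤ δ := by
  classical
  obtain ⟨φ, hφ, hN, hsp⟩ := exists_sparse hideal hu (F ∪ F.image star)
    (η := δ ^ 2 / 8) (by positivity) N
  obtain ⟨K, hK⟩ := exists_nat_gt (24 / δ ^ 2)
  have hK0 : (0 : ℝ) < K := lt_of_le_of_lt (by positivity) hK
  set v : ℕ → M := fun j => u (φ j) with hv
  have h0A : (0 : M) ∈ A := by simpa using hsmul 0 _ (hu.mem 0)
  have hsumA : ∀ s : Finset ℕ, ∑ j ∈ s, v j ∈ A := fun s => by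
    induction s using Finset.induction_on with
    | empty => simpa using h0A
    | insert i s hi ih => rw [Finset.sum_insert hi]; exact hadd _ (hu.mem _) _ ih
  have hKsmul : ∀ y : M, (K : ℝ)⁻¹ • (∑ _j ∈ Finset.range K, y) = y := fun y => by
    rw [Finset.sum_const, Finset.card_range, ← Nat.cast_smul_eq_nsmul ℝ, smul_smul,
      inv_mul_cancel₀ hK0.ne', one_smul]
  refine ⟨(K : ℝ)⁻¹ • ∑ j ∈ Finset.range K, v j, φ K, ?_, ?_, ?_, ?_, ?_, ?_, ?_⟩
  · exact hN.trans_le (hφ.monotone (Nat.zero_le K))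
  · have := hsmul ((K : ℝ)⁻¹ : ℝ) _ (hsumA (Finset.range K))
    rwa [Complex.coe_smul] at this
  · exact smul_nonneg (by positivity) (Finset.sum_nonneg fun j _ => hu.nonneg _)
  · rw [norm_smul, Real.norm_of_nonneg (by positivity)]
    have : ‖∑ j ∈ Finset.range K, v j‖ ≤ K := by
      refine (norm_sum_le _ _).trans ?_
      calc _ ≤ ∑ j ∈ Finset.range K, (1 : ℝ) := Finset.sum_le_sum fun j _ => hu.norm_le _
        _ = K := by simp
    calc _ ≤ (K : ℝ)⁻¹ * K := by gcongr
      _ = 1 := inv_mul_cancel₀ hK0.ne'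
  · rw [smul_mul_assoc, Finset.sum_mul]
    rw [Finset.sum_congr rfl fun j _ => hu.mul_lt N (φ j)
      (hN.trans_le (hφ.monotone (Nat.zero_le j)))]
    exact hKsmul _
  · rw [mul_smul_comm, Finset.mul_sum]
    congr 1
    exact Finset.sum_congr rfl fun j hj => hu.mul_lt _ _ (hφ (Finset.mem_range.1 hj))
  · intro a ha
    have h1 := norm_sum_commutator (v := v) (fun n => hu.nonneg _) (fun n => hu.norm_le _)
      (fun j l hjl => hu.mul_lt _ _ (hφ hjl)) (hF a ha) (η := δ ^ 2 / 8) (by positivity)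
      (fun j l hjl => hsp j l hjl a (Finset.mem_union_left _ ha))
      (fun j l hjl => hsp j l hjl (star a)
        (Finset.mem_union_right _ (Finset.mem_image_of_mem _ ha))) K
    have e : a * ((K : ℝ)⁻¹ • ∑ j ∈ Finset.range K, v j)
        - ((K : ℝ)⁻¹ • ∑ j ∈ Finset.range K, v j) * a
        = -((K : ℝ)⁻¹ • ∑ j ∈ Finset.range K, (v j * a - a * v j)) := by
      rw [Finset.sum_sub_distrib, ← Finset.sum_mul, ← Finset.mul_sum, mul_smul_comm,
        smul_mul_assoc, smul_sub]
      abel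
    rw [e, norm_neg, norm_smul, Real.norm_of_nonneg (by positivity), inv_mul_le_iff₀ hK0]
    refine le_of_sq_le_sq (h1.trans ?_) (by positivity)
    have h2 : 24 < K * δ ^ 2 := by rwa [div_lt_iff₀ (by positivity)] at hK
    nlinarith

end Average

/-! ### Norms seen by an essential ideal -/

section Essential

variable {M : Type*} [NonUnitalCStarAlgebra M] [PartialOrder M] [StarOrderedRing M]

/-- The norm of a positive element is its norm as a left multiplier of an essential ideal. -/
lemma norm_le_of_nonneg {A : Set M} (hideal : ∀ x : M, ∀ a ∈ A, x * a ∈ A ∧ a * x ∈ A)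
    (hessential : ∀ x : M, (∀ a ∈ A, x * a = 0) → x = 0) {h : M} (h0 : 0 ≤ h) {s : ℝ}
    (hs : 0 ≤ s) (hb : ∀ c ∈ A, ‖h * c‖ ≤ s * ‖c‖) : ‖h‖ ≤ s := by
  refine le_of_forall_gt_imp_ge_of_dense fun r hr => ?_
  have hr0 : 0 < r := hs.trans_lt hr
  -- `h` is bounded below by `r > s` on the range of `x = (h - r)₊`, which forces `x A = 0`
  let g : ℝ → ℝ := fun t => max (t - r) 0
  have hg : Continuous g := by fun_prop
  have hg0 : g 0 = 0 := max_eq_right (by linarith)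
  set x := cfcₙ g h with hx
  have hx0 : 0 ≤ x := cfcₙ_nonneg fun t _ => le_max_right _ _
  have hhx : h * x = r • x + x * x := by
    have h1 := cfcₙ_mul (fun t : ℝ => t) g h (by fun_prop) (by simp) hg.continuousOn hg0
    have h2 := cfcₙ_mul g g h hg.continuousOn hg0 hg.continuousOn hg0
    have h3 := cfcₙ_const_mul r g h hg.continuousOn hg0
    have h4 := cfcₙ_add (fun t => r * g t) (fun t => g t * g t) h
      (continuous_const.mul hg).continuousOn (by simp [hg0]) (hg.mul hg).continuousOn
      (by simp [hg0])
    rw [cfcₙ_id' ℝ h (IsSelfAdjoint.of_nonneg h0)] at h1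
    rw [hx, ← h1, ← h2, ← h3, ← h4]
    congr 1
    ext t
    simp only [g]
    rcases le_total (t - r) 0 with ht | ht
    · simp [max_eq_right ht]
    · rw [max_eq_left ht]; ring
  have hxz : x = 0 := by
    refine hessential x fun c hc => ?_
    set d := x * c with hd
    have hdA : d ∈ A := (hideal x c hc).1
    have h1 : star d * (h * d) = r • (star d * d) + star d * x * d := by
      rw [hd, ← mul_assoc h, hhx]
      simp only [add_mul, mul_add, smul_mul_assoc, mul_smul_comm, mul_assoc]
    have h2 : r • (star d * d) ≤ star d * (h * d) := by
      rw [h1]; exact le_add_of_nonneg_right (star_left_conjugate_nonneg hx0 d)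
    have h3 := CStarAlgebra.norm_le_norm_of_nonneg_of_le
      (smul_nonneg hr0.le (star_mul_self_nonneg d)) h2
    rw [norm_smul, CStarRing.norm_star_mul_self, Real.norm_of_nonneg hr0.le] at h3
    have h4 : ‖star d * (h * d)‖ ≤ ‖d‖ * (s * ‖d‖) := by
      refine (norm_mul_le _ _).trans ?_
      rw [norm_star]
      exact mul_le_mul_of_nonneg_left (hb d hdA) (norm_nonneg _)
    have h5 : (r - s) * (‖d‖ * ‖d‖) ≤ 0 := by linarith
    have h6 : ‖d‖ * ‖d‖ ≤ 0 := by
      by_contra! h7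
      nlinarith [mul_pos (sub_pos.2 hr) h7]
    exact norm_eq_zero.1 (mul_self_eq_zero.1 (le_antisymm h6 (mul_self_nonneg _)))
  rw [← cfcₙ_id' ℝ h (IsSelfAdjoint.of_nonneg h0)]
  refine norm_cfcₙ_le fun t ht => ?_
  have ht0 := quasispectrum_nonneg_of_nonneg h h0 t ht
  have h1 := norm_apply_le_norm_cfcₙ g h ht hg.continuousOn hg0
    (IsSelfAdjoint.of_nonneg h0)
  rw [← hx, hxz, norm_zero, Real.norm_eq_abs] at h1
  have h2 : t - r ≤ 0 := (le_max_left _ _).trans ((le_abs_self (g t)).trans h1)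
  rw [Real.norm_of_nonneg ht0]
  linarith

lemma norm_le_of_compress {A : Set M} (hideal : ∀ x : M, ∀ a ∈ A, x * a ∈ A ∧ a * x ∈ A)
    (hessential : ∀ x : M, (∀ a ∈ A, x * a = 0) → x = 0) {u : ℕ → M} (hu : NestedUnit A u)
    {b : M} {s : ℝ} (hs : 0 ≤ s) (hb : ∀ k, ‖u k * b * u k‖ ≤ s) : ‖b‖ ≤ s := by
  have hstar : ∀ n, star (u n) = u n := fun n => IsSelfAdjoint.of_nonneg (hu.nonneg n)
  have key : ∀ b : M, (∀ k, ‖u k * b * u k‖ ≤ s) → ∀ d ∈ A, ‖b * d‖ ≤ s * ‖d‖ := by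
    intro b hb d hd
    have h1 : Tendsto (fun k => ‖star (u k * (b * d)) * (b * (u k * d))‖) atTop
        (𝓝 ‖star (b * d) * (b * d)‖) :=
      (((hu.tendsto _ (hideal b d hd).1).star).mul
        (tendsto_const_nhds.mul (hu.tendsto d hd))).norm
    have h2 : ‖star (b * d) * (b * d)‖ ≤ ‖b * d‖ * (s * ‖d‖) := by
      refine le_of_tendsto h1 (Eventually.of_forall fun k => ?_)
      have e : star (u k * (b * d)) * (b * (u k * d)) = star (b * d) * ((u k * b * u k) * d) := by
        rw [star_mul (u k), hstar]; noncomm_ring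
      rw [e]
      refine (norm_mul_le _ _).trans ?_
      rw [norm_star]
      refine mul_le_mul_of_nonneg_left ((norm_mul_le _ _).trans ?_) (norm_nonneg _)
      exact mul_le_mul_of_nonneg_right (hb k) (norm_nonneg _)
    rw [CStarRing.norm_star_mul_self] at h2
    rcases (norm_nonneg (b * d)).eq_or_lt with h0 | h0
    · rw [← h0]; positivity
    · exact le_of_mul_le_mul_left h2 h0
  have hb' : ∀ k, ‖u k * star b * u k‖ ≤ s := fun k => by
    have : u k * star b * u k = star (u k * b * u k) := by
      simp only [star_mul, hstar, mul_assoc]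
    rw [this, norm_star]; exact hb k
  have h1 : ‖star b * b‖ ≤ s * s := by
    refine norm_le_of_nonneg hideal hessential (star_mul_self_nonneg b) (by positivity) ?_
    intro c hc
    rw [mul_assoc, mul_assoc]
    exact (key _ hb' _ (hideal b c hc).1).trans (mul_le_mul_of_nonneg_left (key b hb c hc) hs)
  rw [CStarRing.norm_star_mul_self] at h1
  nlinarith [norm_nonneg b]

/-- Compressions by a nested approximate unit of an essential ideal recover norms. -/
lemma eventually_norm_compress {A : Set M}
    (hideal : ∀ x : M, ∀ a ∈ A, x * a ∈ A ∧ a * x ∈ A)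
    (hessential : ∀ x : M, (∀ a ∈ A, x * a = 0) → x = 0) {u : ℕ → M} (hu : NestedUnit A u)
    (b : M) {ε : ℝ} (hε : 0 < ε) : ∀ᶠ k in atTop, ‖b‖ - ε ≤ ‖u k * b * u k‖ := by
  have hstar : ∀ n, star (u n) = u n := fun n => IsSelfAdjoint.of_nonneg (hu.nonneg n)
  have hmono : Monotone fun k => ‖u k * b * u k‖ := monotone_nat_of_le_succ fun k => by
    have h1 := hu.mul_lt k (k + 1) (Nat.lt_succ_self k)
    have h2 : u k * u (k + 1) = u k := by
      have := congrArg star h1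
      rwa [star_mul, hstar, hstar] at this
    have e : u k * b * u k = u k * (u (k + 1) * b * u (k + 1)) * u k := by
      calc u k * b * u k = (u k * u (k + 1)) * b * (u (k + 1) * u k) := by rw [h1, h2]
        _ = _ := by noncomm_ring
    rw [e]
    refine (norm_mul_le _ _).trans ((mul_le_of_le_one_right (norm_nonneg _) (hu.norm_le k)).trans ?_)
    exact (norm_mul_le _ _).trans (mul_le_of_le_one_left (norm_nonneg _) (hu.norm_le k))
  have : ∃ k, ‖b‖ - ε ≤ ‖u k * b * u k‖ := by
    by_contra! hcon
    have h0 : 0 ≤ ‖b‖ - ε := (norm_nonneg _).trans (hcon 0).le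
    have := norm_le_of_compress hideal hessential hu h0 fun k => (hcon k).le
    linarith
  obtain ⟨k, hk⟩ := this
  filter_upwards [eventually_ge_atTop k] with l hl
  exact hk.trans (hmono hl)

end Essential

/-! ### The inductive construction -/

lemma exists_seq_of_step {α : Type*} (P : ℕ → α → Prop) (R : ℕ → α → α → Prop)
    (h0 : ∃ s, P 0 s) (hstep : ∀ n s, P n s → ∃ s', P (n + 1) s' ∧ R n s s') :
    ∃ t : ℕ → α, (∀ n, P n (t n)) ∧ ∀ n, R n (t n) (t (n + 1)) := by
  obtain ⟨s0, hs0⟩ := h0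
  choose g hg1 hg2 using hstep
  let t : (n : ℕ) → {s // P n s} := fun n =>
    Nat.rec (motive := fun n => {s // P n s}) ⟨s0, hs0⟩ (fun n s => ⟨g n s.1 s.2, hg1 n s.1 s.2⟩) n
  exact ⟨fun n => (t n).1, fun n => (t n).2, fun n => hg2 n (t n).1 (t n).2⟩

/-- The sequence underlying the theorem, with a nested approximate unit `u`: each `u (N n)` is a
unit for `e n`, and for some `k > N n` the next term `e (n + 1)` is a unit for `u k`, where `k` is
so large that compressing by `u k` almost preserves the norm of `(1 - u (N n)) a (1 - u (N n))`. -/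
lemma exists_interlaced {M : Type*} [NonUnitalCStarAlgebra M] [PartialOrder M] [StarOrderedRing M]
    {A : Set M} (hadd : ∀ a ∈ A, ∀ b ∈ A, a + b ∈ A) (hsmul : ∀ (z : ℂ), ∀ a ∈ A, z • a ∈ A)
    (hideal : ∀ x : M, ∀ a ∈ A, x * a ∈ A ∧ a * x ∈ A)
    (hessential : ∀ x : M, (∀ a ∈ A, x * a = 0) → x = 0) {u : ℕ → M} (hu : NestedUnit A u)
    (F : ℕ → Finset M) (hFball : ∀ n, ∀ a ∈ F n, ‖a‖ ≤ 1)
    (ε D : ℕ → ℝ) (hε : ∀ n, 0 < ε n) (hD : ∀ n, 0 < D n) :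
    ∃ (N : ℕ → ℕ) (e : ℕ → M),
      (∀ n, e n ∈ A ∧ 0 ≤ e n ∧ ‖e n‖ ≤ 1 ∧ e n * u n = u n ∧ u (N n) * e n = e n ∧
        ∀ a ∈ F n, ‖a * e n - e n * a‖ ≤ D n) ∧
      ∀ n, ∃ k, N n < k ∧ e (n + 1) * u k = u k ∧ ∀ a ∈ F n,
        ‖a - u (N n) * a - a * u (N n) + u (N n) * a * u (N n)‖ - ε n ≤
        ‖u k * (a - u (N n) * a - a * u (N n) + u (N n) * a * u (N n)) * u k‖ := by
  obtain ⟨t, ht1, ht2⟩ := exists_seq_of_step (α := ℕ × M)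
    (fun n s => s.2 ∈ A ∧ 0 ≤ s.2 ∧ ‖s.2‖ ≤ 1 ∧ s.2 * u n = u n ∧ u s.1 * s.2 = s.2 ∧
        ∀ a ∈ F n, ‖a * s.2 - s.2 * a‖ ≤ D n)
    (fun n s s' => ∃ k, s.1 < k ∧ s'.2 * u k = u k ∧ ∀ a ∈ F n,
        ‖a - u s.1 * a - a * u s.1 + u s.1 * a * u s.1‖ - ε n ≤
        ‖u k * (a - u s.1 * a - a * u s.1 + u s.1 * a * u s.1) * u k‖)
    (by
      obtain ⟨e, N, -, h⟩ := exists_quasicentral hadd hsmul hideal hu (F 0) (hFball 0) (hD 0) 0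
      exact ⟨(N, e), h⟩)
    (by
      intro n s _
      have hev := (eventually_all_finset (F n)).2 fun a (_ : a ∈ F n) =>
        eventually_norm_compress hideal hessential hu
          (a - u s.1 * a - a * u s.1 + u s.1 * a * u s.1) (hε n)
      obtain ⟨k, hk1, hk2, hk3⟩ := (hev.and ((eventually_gt_atTop s.1).and
        (eventually_gt_atTop (n + 1)))).exists
      obtain ⟨e, N, -, h1, h2, h3, h4, h5, h6⟩ :=
        exists_quasicentral hadd hsmul hideal hu (F (n + 1)) (hFball _) (hD (n + 1)) k
      refine ⟨(N, e), ⟨h1, h2, h3, ?_, h5, h6⟩, k, hk2, h4, hk1⟩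
      rw [← hu.mul_lt (n + 1) k hk3, ← mul_assoc, h4])
  exact ⟨fun n => (t n).1, fun n => (t n).2, ht1, ht2⟩

theorem approximate_unit_lemma (M : Type*) [NonUnitalCStarAlgebra M]
    [PartialOrder M] [StarOrderedRing M]
    (A : Set M) (hclosed : IsClosed A)
    (hadd : ∀ a ∈ A, ∀ b ∈ A, a + b ∈ A) (hsmul : ∀ (z : ℂ), ∀ a ∈ A, z • a ∈ A)
    (hideal : ∀ x : M, ∀ a ∈ A, x * a ∈ A ∧ a * x ∈ A)
    (hessential : ∀ x : M, (∀ a ∈ A, x * a = 0) → x = 0)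
    (hσ : ∃ e : ℕ → M, (∀ n, e n ∈ A ∧ 0 ≤ e n ∧ ‖e n‖ ≤ 1) ∧ Monotone e ∧
      ∀ a ∈ A, Filter.Tendsto (fun n => ‖e n * a - a‖) Filter.atTop (nhds 0))
    (F : ℕ → Finset M) (hF : Monotone F) (hFball : ∀ n, ∀ a ∈ F n, ‖a‖ ≤ 1)
    (ε : ℕ → ℝ) (hεpos : ∀ n, 0 < ε n) (hεanti : Antitone ε)
    (hεlim : Filter.Tendsto ε Filter.atTop (nhds 0)) :
    ∃ e f : ℕ → M,
      -- `(eₙ)` is an increasing approximate unit for `A` of positive contractions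
      (∀ n, e n ∈ A ∧ 0 ≤ e n ∧ ‖e n‖ ≤ 1) ∧ Monotone e ∧
      (∀ a ∈ A, Filter.Tendsto (fun n => ‖e n * a - a‖) Filter.atTop (nhds 0)) ∧
      -- `fₙ` is the positive square root of `eₙ₊₁ - eₙ`
      (∀ n, 0 ≤ f n ∧ f n * f n = e (n + 1) - e n) ∧
      -- (1)
      (∀ n, ∀ a ∈ F n, ‖a * f n - f n * a‖ ≤ ε n) ∧
      -- (2)
      (∀ n, ∀ a ∈ F n, Metric.infDist a A - ε n ≤ ‖f n * a * f n‖) ∧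
      -- (3)
      (∀ m n : ℕ, m + 2 ≤ n ∨ n + 2 ≤ m → f m * f n = 0) ∧
      -- (4)
      (∀ n, ‖f n * f (n + 1) - f (n + 1) * f n‖ ≤ ε n) := by
  obtain ⟨E, hE, -, hlim⟩ := hσ
  obtain ⟨u, hu⟩ := exists_nestedUnit A hclosed hadd hsmul hideal hE hlim
  choose δ hδ0 hδ using fun n => commutator_sqrt M (ε n) (hεpos n)
  -- `e n` enters both `f n` and `f (n - 1)`, so it has to meet the tolerances of both
  obtain ⟨N, e, he, hstep⟩ := exists_interlaced hadd hsmul hideal hessential hu F hFball ε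
    (fun n => min (δ n) (δ (n - 1)) / 2) hεpos (fun n => half_pos (lt_min (hδ0 _) (hδ0 _)))
  have hus : ∀ n, star (u n) = u n := fun n => IsSelfAdjoint.of_nonneg (hu.nonneg n)
  have hes : ∀ n, star (e n) = e n := fun n => IsSelfAdjoint.of_nonneg (he n).2.1
  have hsucc : ∀ n, e (n + 1) * e n = e n := fun n => by
    obtain ⟨k, hk, hek, -⟩ := hstep n
    have h1 : e (n + 1) * u (N n) = u (N n) := by
      rw [← hu.mul_lt _ _ hk, ← mul_assoc, hek]
    rw [← (he n).2.2.2.2.1, ← mul_assoc, h1]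
  have hlt : ∀ m n, m < n → e n * e m = e m := fun m n hmn => by
    induction n, hmn using Nat.le_induction with
    | base => exact hsucc m
    | succ n _ ih => rw [← ih, ← mul_assoc, hsucc]
  have hlt' : ∀ m n, m < n → e m * e n = e m := fun m n hmn => by
    have := congrArg star (hlt m n hmn)
    rwa [star_mul, hes, hes] at this
  have hcomm : ∀ m n, Commute (e m) (e n) := fun m n => by
    rcases lt_trichotomy m n with h | rfl | h
    · exact (hlt' m n h).trans (hlt m n h).symm
    · exact Commute.refl _
    · exact (hlt n m h).trans (hlt' n m h).symm
  have hle : ∀ n, e n ≤ e (n + 1) := fun n =>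
    le_of_mul_eq (he n).2.1 (he n).2.2.1 (he _).2.1 (he _).2.2.1 (hsucc n)
  have hx0 : ∀ n, 0 ≤ e (n + 1) - e n := fun n => sub_nonneg.2 (hle n)
  have hx1 : ∀ n, ‖e (n + 1) - e n‖ ≤ 1 := fun n =>
    (CStarAlgebra.norm_le_norm_of_nonneg_of_le (hx0 n) (sub_le_self _ (he n).2.1)).trans
      (he _).2.2.1
  have horth : ∀ m n, m + 2 ≤ n →
      CFC.sqrt (e (m + 1) - e m) * CFC.sqrt (e (n + 1) - e n) = 0 := fun m n hmn => by
    refine sqrt_mul_sqrt_eq_zero (hx0 m) (hx0 n) ?_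
    rw [sub_mul, mul_sub, mul_sub, hlt' (m + 1) (n + 1) (by omega), hlt' (m + 1) n (by omega),
      hlt' m (n + 1) (by omega), hlt' m n (by omega)]
    simp
  refine ⟨e, fun n => CFC.sqrt (e (n + 1) - e n), fun n => ⟨(he n).1, (he n).2.1, (he n).2.2.1⟩,
    monotone_nat_of_le_succ hle, fun a ha => ?_, fun n => ⟨CFC.sqrt_nonneg _,
      CFC.sqrt_mul_sqrt_self _ (hx0 n)⟩, fun n a ha => ?_, fun n a ha => ?_, fun m n hmn => ?_,
      fun n => ?_⟩
  · have h1 : Tendsto (fun n => 2 * ‖u n * a - a‖) atTop (𝓝 (2 * 0)) :=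
      (tendsto_iff_norm_sub_tendsto_zero.1 (hu.tendsto a ha)).const_mul 2
    rw [mul_zero] at h1
    refine squeeze_zero (fun n => norm_nonneg _) (fun n => ?_) h1
    have h2 : e n * a - a = (u n * a - a) - e n * (u n * a - a) := by
      rw [mul_sub, ← mul_assoc, (he n).2.2.2.1]; abel
    rw [h2, two_mul]
    exact (norm_sub_le _ _).trans (add_le_add le_rfl ((norm_mul_le _ _).trans
      (mul_le_of_le_one_left (norm_nonneg _) (he n).2.2.1)))
  · refine hδ n a _ (hFball n a ha) (hx0 n) (hx1 n) ?_
    have h1 := (he n).2.2.2.2.2 a ha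
    have h2 := (he (n + 1)).2.2.2.2.2 a (hF (Nat.le_succ n) ha)
    have h3 : min (δ n) (δ (n - 1)) ≤ δ n := min_le_left _ _
    have h4 : min (δ (n + 1)) (δ (n + 1 - 1)) ≤ δ n := min_le_right _ _
    have e1 : a * (e (n + 1) - e n) - (e (n + 1) - e n) * a
        = (a * e (n + 1) - e (n + 1) * a) - (a * e n - e n * a) := by noncomm_ring
    rw [e1]
    exact (norm_sub_le _ _).trans (by linarith)
  · obtain ⟨k, hk, hek, hnorm⟩ := hstep n
    have hn := hnorm a ha
    set p := u (N n) with hp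
    set f := CFC.sqrt (e (n + 1) - e n) with hf
    have hf0 : 0 ≤ f := CFC.sqrt_nonneg _
    have hfs : star f = f := IsSelfAdjoint.of_nonneg hf0
    have hpk : u k * p = p := hu.mul_lt _ _ hk
    have hpk' : p * u k = p := by
      have := congrArg star hpk
      rwa [star_mul, hus, hus] at this
    have hep : e n * p = e n := by
      have := congrArg star (he n).2.2.2.2.1
      rwa [star_mul, hes, hus] at this
    -- `w` lives where `e (n + 1)` acts as a unit and `e n` vanishes, so `f` acts as a unit on it
    set w := u k - p with hw
    have hws : star w = w := by rw [hw, star_sub, hus, hus]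
    have hw0 : 0 ≤ w := sub_nonneg.2 (le_of_mul_eq (hu.nonneg _) (hu.norm_le _) (hu.nonneg _)
      (hu.norm_le _) hpk)
    have hw1 : ‖w‖ ≤ 1 :=
      (CStarAlgebra.norm_le_norm_of_nonneg_of_le hw0 (sub_le_self _ (hu.nonneg _))).trans
        (hu.norm_le k)
    have hew : e (n + 1) * w = w := by
      have : e (n + 1) * p = p := by rw [← hpk, ← mul_assoc, hek]
      rw [hw, mul_sub, hek, this]
    have hew' : e n * w = 0 := by
      have : e n * u k = e n := by rw [← hep, mul_assoc, hpk']
      rw [hw, mul_sub, this, hep, sub_self]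
    have hfw : f * w = w := by
      refine mul_eq_self_of_sq hf0 ?_
      rw [hf, CFC.sqrt_mul_sqrt_self _ (hx0 n), sub_mul, hew, hew', sub_zero]
    have hwf : w * f = w := by
      have := congrArg star hfw
      rwa [star_mul, hws, hfs] at this
    have h1 : u k * (a - p * a - a * p + p * a * p) * u k = w * (f * a * f) * w := by
      have l : w * (f * a * f) * w = w * a * w := by
        calc w * (f * a * f) * w = (w * f) * a * (f * w) := by noncomm_ring
          _ = _ := by rw [hfw, hwf]
      rw [l]
      calc _ = u k * a * u k - (u k * p) * a * u k - u k * a * (p * u k)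
            + (u k * p) * a * (p * u k) := by noncomm_ring
        _ = w * a * w := by rw [hpk, hpk', hw]; noncomm_ring
    have h2 : ‖w * (f * a * f) * w‖ ≤ ‖f * a * f‖ :=
      (norm_mul_le _ _).trans ((mul_le_of_le_one_right (norm_nonneg _) hw1).trans
        ((norm_mul_le _ _).trans (mul_le_of_le_one_left (norm_nonneg _) hw1)))
    have hmem : p * a + (a * p + (-1 : ℂ) • (p * a * p)) ∈ A :=
      hadd _ (hideal a p (hu.mem _)).2 _ (hadd _ (hideal a p (hu.mem _)).1 _
        (hsmul _ _ (hideal _ p (hu.mem _)).1))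
    have h3 : Metric.infDist a A ≤ ‖a - p * a - a * p + p * a * p‖ := by
      refine (Metric.infDist_le_dist_of_mem hmem).trans_eq ?_
      rw [dist_eq_norm]
      congr 1
      rw [neg_smul, one_smul]
      abel
    rw [h1] at hn
    linarith
  · rcases hmn with h | h
    · exact horth m n h
    · have := congrArg star (horth n m h)
      rwa [star_mul, star_zero, IsSelfAdjoint.of_nonneg (CFC.sqrt_nonneg (e (m + 1) - e m)),
        IsSelfAdjoint.of_nonneg (CFC.sqrt_nonneg (e (n + 1) - e n))] at this
  · have : Commute (CFC.sqrt (e (n + 1) - e n)) (CFC.sqrt (e (n + 1 + 1) - e (n + 1))) :=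
      sqrt_commute (((hcomm _ _).sub_right (hcomm _ _)).sub_left
        ((hcomm _ _).sub_right (hcomm _ _)))
    rw [this.eq, sub_self, norm_zero]
    exact (hεpos n).le
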